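/- Let K be an imaginary quadratic field, c > 0, and w = (w₁,w₂) ∈ Z[I_K] a weight. The set Ξ_w(O_{K,c}) of algebraic Hecke characters of weight w trivial on Ô_{K,c}^× is nonempty if and only if: (O_K^×)^w = 1 when c = 1; |w| = w₁ + w₂ is even when c ≥ 2. Moreover, when nonempty, Ξ_w(O_{K,c}) is a basis of the space S_w(O_{K,c}) of K^×-modular forms of weight w and level O_{K,c}. -/

import Mathlib

/-!
Put `H = K^× ℂ^× U ⊆ G` and let `z^w` be the weight character. Everything rests on the equivalence of
two conditions: `Ξ_w` is nonempty, and `v^w = 1` for every unit `v` of the order `ℤ + c O_K`. By `hH`,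
these units are exactly the `z ∈ ℂ^×` whose image in `G` lies in `K^× U`, so the second condition says
precisely that `λ z u ↦ z^{-w}` is a well-defined character of `H`. As `ℂ^×` is divisible, hence an
injective abelian group, such a character extends to `G` (`exists_extension`). Conversely, if
`f ∈ S_w` and `z = v` is a unit of the order, then `f(s) = v^{-w} f(s)` for all `s`, so a nonzero `f`
forces `v^w = 1`. In particular `S_w = 0` when `Ξ_w` is empty.

For `c = 1` the order is `O_K`. For `c ≥ 2` its units are `±1`
(`unit_of_order_eq_one_or_neg_one`), and the condition becomes `(-1)^{w₁+w₂} = 1`.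

If `χ ∈ Ξ_w` and `f ∈ S_w`, then `f/χ` is a function on the finite group `G/H`, hence a
combination of characters of `G/H`; multiplying back by `χ` expresses `f` through `Ξ_w`. Linear
independence of `Ξ_w` is Dedekind's independence of characters.
-/

open NumberField

/-- The space `S_w(O_{K,c})` of `K^×`-modular forms of weight `w = (w₁,w₂)` and
level `O_{K,c}`: functions `f` on the idèle group `G` with
`f(λ·z·u·s) = z^{−w} f(s)` for `λ ∈ K^×`, `z ∈ ℂ^×`, `u ∈ Ô_{K,c}^×`. -/
def SwSet {K : Type*} [Field K] (G : Type*) [CommGroup G]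
    (i : Kˣ →* G) (j : ℂˣ →* G) (U : Subgroup G) (w₁ w₂ : ℤ) : Set (G → ℂ) :=
  {f | ∀ (s : G) (lam : Kˣ) (z : ℂˣ), ∀ u ∈ U,
    f (i lam * j z * u * s) =
      ((z : ℂ) ^ w₁ * (starRingEnd ℂ) (z : ℂ) ^ w₂)⁻¹ * f s}

/-- The algebraic Hecke characters of weight `w` trivial on `Ô_{K,c}^×`:
multiplicative elements of `S_w`. -/
def XiSet {K : Type*} [Field K] (G : Type*) [CommGroup G]
    (i : Kˣ →* G) (j : ℂˣ →* G) (U : Subgroup G) (w₁ w₂ : ℤ) : Set (G → ℂ) :=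
  {f | f ∈ SwSet G i j U w₁ w₂ ∧ f 1 = 1 ∧ ∀ a b : G, f (a * b) = f a * f b}

/-! ### Units of the order of conductor `c` -/

/-- An imaginary quadratic field has exactly the two complex embeddings `σ` and its conjugate, so the
norm of an integer `y` is `|σ y|²`. -/
lemma norm_eq_normSq {K : Type*} [Field K] [NumberField K]
    (h2 : Module.finrank ℚ K = 2)
    (him : ∀ v : NumberField.InfinitePlace K, v.IsComplex)
    (σ : K →+* ℂ) (y : 𝓞 K) :
    ((Algebra.norm ℤ y : ℤ) : ℝ) = Complex.normSq (σ (y : K)) := by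
  classical
  have hne : RingHom.equivRatAlgHom K ℂ (ComplexEmbedding.conjugate σ) ≠
      RingHom.equivRatAlgHom K ℂ σ := by
    intro h
    have h' := (RingHom.equivRatAlgHom K ℂ).injective h
    exact InfinitePlace.isComplex_mk_iff.1 (him (InfinitePlace.mk σ))
      (ComplexEmbedding.isReal_iff.2 h')
  have hcard : Fintype.card (K →ₐ[ℚ] ℂ) = 2 := by rw [AlgHom.card, h2]
  have huniv : (Finset.univ : Finset (K →ₐ[ℚ] ℂ)) =
      {RingHom.equivRatAlgHom K ℂ (ComplexEmbedding.conjugate σ), RingHom.equivRatAlgHom K ℂ σ} := by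
    symm
    apply Finset.eq_univ_of_card
    rw [Finset.card_pair hne, hcard]
  have h := Algebra.norm_eq_prod_embeddings ℚ ℂ (y : K)
  rw [huniv, Finset.prod_pair hne, ← Algebra.coe_norm_int] at h
  have h3 : ((Algebra.norm ℤ y : ℤ) : ℂ) = ((Complex.normSq (σ (y : K)) : ℝ) : ℂ) := by
    rw [Complex.normSq_eq_conj_mul_self]
    simpa using h
  exact_mod_cast h3

/-- For `c ≥ 2` a unit `v = n + c y` has `|σ v| = 1`, and
`4 (Im σ v)² = c² D` where `-D ≡ 0, 1 mod 4` is the discriminant of the minimal equation of `y`.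
If `D ≠ 0`, then `D ≥ 3` and `c² D ≥ 12 > 4`, which is impossible; so `σ v` is real. -/
lemma unit_of_order_eq_one_or_neg_one {K : Type*} [Field K] [NumberField K]
    (h2 : Module.finrank ℚ K = 2)
    (him : ∀ v : NumberField.InfinitePlace K, v.IsComplex)
    (σ : K →+* ℂ) (c : ℕ) (hc : 2 ≤ c) (v : (𝓞 K)ˣ) (n : ℤ) (y : 𝓞 K)
    (hv : (v : 𝓞 K) = (n : 𝓞 K) + (c : 𝓞 K) * y) :
    σ ((v : 𝓞 K) : K) = 1 ∨ σ ((v : 𝓞 K) : K) = -1 := by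
  have hN := norm_eq_normSq h2 him σ
  have hz : σ ((v : 𝓞 K) : K) = n + c * σ (y : K) := by rw [hv]; simp
  have hv1 : Complex.normSq (σ ((v : 𝓞 K) : K)) = 1 := by
    have hu : IsUnit (Algebra.norm ℤ (v : 𝓞 K)) := v.isUnit.map _
    have h := hN (v : 𝓞 K)
    rcases Int.isUnit_iff.1 hu with h1 | h1
    · rw [← h, h1]; simp
    · rw [h1] at h
      have := Complex.normSq_nonneg (σ ((v : 𝓞 K) : K))
      push_cast at h
      linarith
  obtain ⟨m, hm⟩ : ∃ m : ℤ, (m : ℝ) = Complex.normSq (σ (y : K)) := ⟨_, hN y⟩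
  -- the trace of `y` is an integer because it is `N(y + 1) - N(y) - 1`
  obtain ⟨s, hs⟩ : ∃ s : ℤ, (s : ℝ) = 2 * (σ (y : K)).re := by
    refine ⟨Algebra.norm ℤ (y + 1) - m - 1, ?_⟩
    push_cast
    rw [hN, hm]
    simp [Complex.normSq_apply]
    ring
  have him2 : (4 * m - s ^ 2 : ℝ) = 4 * (σ (y : K)).im ^ 2 := by
    rw [hm, hs, Complex.normSq_apply]; ring
  have hre : (σ ((v : 𝓞 K) : K)).re = n + c * (σ (y : K)).re := by rw [hz]; simp
  have himz : (σ ((v : 𝓞 K) : K)).im = c * (σ (y : K)).im := by rw [hz]; simp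
  have hD0 : 0 ≤ 4 * m - s ^ 2 := by
    have : (0 : ℝ) ≤ 4 * m - s ^ 2 := by rw [him2]; positivity
    exact_mod_cast this
  have hc' : (2 : ℝ) ≤ c := by exact_mod_cast hc
  rw [Complex.normSq_apply] at hv1
  have hD3 : 4 * m - s ^ 2 < 3 := by
    by_contra! hcon
    have hcon' : (3 : ℝ) ≤ 4 * m - s ^ 2 := by exact_mod_cast hcon
    rw [him2] at hcon'
    have h5 : (σ ((v : 𝓞 K) : K)).im ^ 2 ≤ 1 := by nlinarith [sq_nonneg (σ ((v : 𝓞 K) : K)).re]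
    rw [himz, mul_pow] at h5
    have h6 : (4 : ℝ) ≤ (c : ℝ) ^ 2 := by nlinarith
    nlinarith [sq_nonneg (σ (y : K)).im]
  have hD : 4 * m - s ^ 2 = 0 := by
    rcases Int.even_or_odd' s with ⟨k, rfl | rfl⟩
    · ring_nf at *
      omega
    · ring_nf at *
      omega
  have hy0 : (σ (y : K)).im = 0 := by
    have : (4 * m - s ^ 2 : ℝ) = 0 := by exact_mod_cast hD
    rw [this] at him2
    nlinarith
  have hz0 : (σ ((v : 𝓞 K) : K)).im = 0 := by rw [himz, hy0, mul_zero]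
  rw [hz0, mul_zero, add_zero] at hv1
  rcases mul_self_eq_one_iff.1 hv1 with h | h
  · left; apply Complex.ext <;> simp [h, hz0]
  · right; apply Complex.ext <;> simp [h, hz0]

/-! ### Extending characters -/

/-- A character `ψ` that is trivial on the kernel of `φ : A → G` factors through `φ` and
extends to `G`, because `ℂ^×` is divisible. -/
lemma exists_extension {A G : Type*} [CommGroup A] [CommGroup G]
    (φ : A →* G) (ψ : A →* ℂˣ) (h : ∀ a, φ a = 1 → ψ a = 1) :
    ∃ χ : G →* ℂˣ, ∀ a, χ (φ a) = ψ a := by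
  have hpow : ∀ {n : ℕ}, n ≠ 0 → Function.Surjective (fun a : ℂˣ => a ^ n) := by
    intro n hn a
    obtain ⟨b, hb⟩ := IsAlgClosed.exists_pow_nat_eq (a : ℂ) (Nat.pos_of_ne_zero hn)
    have hb0 : b ≠ 0 := by
      rintro rfl
      rw [zero_pow hn] at hb
      exact a.ne_zero hb.symm
    exact ⟨Units.mk0 b hb0, Units.ext (by simpa using hb)⟩
  let _ : DivisibleBy (Additive ℂˣ) ℕ := divisibleByOfSMulRightSurj _ _
    (fun {n} hn => hpow (n := n) hn)
  let _ : DivisibleBy (Additive ℂˣ) ℤ := AddGroup.divisibleByIntOfDivisibleByNat _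
  have hker : φ.rangeRestrict.ker ≤ ψ.ker := by
    intro a ha
    rw [MonoidHom.ker_rangeRestrict] at ha
    exact h a ha
  let ψ' : φ.range →* ℂˣ := φ.rangeRestrict.liftOfSurjective φ.rangeRestrict_surjective ⟨ψ, hker⟩
  have hψ' : ∀ a, ψ' (φ.rangeRestrict a) = ψ a := fun a =>
    φ.rangeRestrict.liftOfRightInverse_comp_apply _ _ ⟨ψ, hker⟩ a
  obtain ⟨g, hg⟩ := (Module.Baer.of_divisible (Additive ℂˣ)).extension_property_addMonoidHom
    (MonoidHom.toAdditive φ.range.subtype) φ.range.subtype_injective (MonoidHom.toAdditive ψ')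
  refine ⟨MonoidHom.toAdditive.symm g, fun a => ?_⟩
  rw [← hψ' a]
  exact congrArg Additive.toMul (DFunLike.congr_fun hg (Additive.ofMul (φ.rangeRestrict a)))

/-! ### Hecke characters and modular forms of weight `w` -/

/-- The weight character `z ↦ z^{w₁} z̄^{w₂}` of `ℂ^×`. -/
noncomputable def weightHom (w₁ w₂ : ℤ) : ℂˣ →* ℂˣ :=
  zpowGroupHom w₁ * (zpowGroupHom w₂).comp (Units.map (starRingEnd ℂ : ℂ →* ℂ))

lemma coe_weightHom (w₁ w₂ : ℤ) (z : ℂˣ) :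
    ((weightHom w₁ w₂ z : ℂˣ) : ℂ) = (z : ℂ) ^ w₁ * (starRingEnd ℂ) (z : ℂ) ^ w₂ := by
  simp [weightHom]

section

variable {K : Type*} [Field K] {G : Type*} [CommGroup G]
  {i : Kˣ →* G} {j : ℂˣ →* G} {U : Subgroup G} {w₁ w₂ : ℤ}

/-- If `z ∈ ℂ^×` maps into `K^× U`, then a form `f` of weight `w` satisfies
`f(s) = z^{-w} f(s)`, so `z^w = 1` unless `f = 0`. -/
lemma weightHom_eq_one_of_mem {f : G → ℂ} (hf : f ∈ SwSet G i j U w₁ w₂) {s : G}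
    (hs : f s ≠ 0) {z : ℂˣ} (hz : ∃ lam : Kˣ, ∃ u ∈ U, j z = i lam * u) :
    weightHom w₁ w₂ z = 1 := by
  obtain ⟨lam, u, hu, h⟩ := hz
  have h1 := hf s lam⁻¹ z u⁻¹ (U.inv_mem hu)
  have h3 : i lam⁻¹ * j z * u⁻¹ * s = s := by rw [h, map_inv]; group
  rw [h3, ← coe_weightHom] at h1
  have h4 := mul_right_cancel₀ hs ((one_mul _).trans h1)
  ext
  simpa using h4.symm

/-- The character `λ z u ↦ z^{-w}` of `K^× ℂ^× U` is well defined as soon as `z^w = 1` for all `z`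
mapping into `K^× U`, and it then extends to a Hecke character. -/
lemma exists_hecke_of_trivial
    (h : ∀ z : ℂˣ, (∃ lam : Kˣ, ∃ u ∈ U, j z = i lam * u) → weightHom w₁ w₂ z = 1) :
    ∃ χ : G →* ℂˣ, (fun s => (χ s : ℂ)) ∈ XiSet G i j U w₁ w₂ := by
  obtain ⟨χ, hχ⟩ := exists_extension ((i.coprod j).coprod U.subtype)
    ((weightHom w₁ w₂)⁻¹.comp ((MonoidHom.snd Kˣ ℂˣ).comp (MonoidHom.fst (Kˣ × ℂˣ) U))) (by
      rintro ⟨⟨lam, z⟩, u⟩ ha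
      have ha' : i lam * j z * (u : G) = 1 := by simpa using ha
      have : weightHom w₁ w₂ z = 1 := by
        refine h z ⟨lam⁻¹, (u : G)⁻¹, U.inv_mem u.2, ?_⟩
        rw [map_inv, ← mul_inv, eq_inv_iff_mul_eq_one, ← ha', mul_comm (j z), mul_right_comm]
      simp [this])
  refine ⟨χ, ⟨fun s lam z u hu => ?_, by simp, fun a b => by simp⟩⟩
  have h1 := hχ ((lam, z), ⟨u, hu⟩)
  simp only [MonoidHom.coprod_apply, Subgroup.coe_subtype] at h1
  change ((χ (i lam * j z * u * s) : ℂˣ) : ℂ) = _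
  rw [map_mul, h1, ← coe_weightHom]
  simp

/-- Multiplication by a fixed `χ ∈ Ξ_w` carries functions on the finite class group onto `S_w` and
its characters into `Ξ_w`. -/
lemma mem_span_of_hecke
    (hfin : Finite (G ⧸ Subgroup.closure (Set.range i ∪ Set.range j ∪ (U : Set G))))
    {χ : G →* ℂˣ} (hχ : (fun s => (χ s : ℂ)) ∈ XiSet G i j U w₁ w₂)
    {f : G → ℂ} (hf : f ∈ SwSet G i j U w₁ w₂) :
    f ∈ Submodule.span ℂ (XiSet G i j U w₁ w₂) := by
  set H := Subgroup.closure (Set.range i ∪ Set.range j ∪ (U : Set G)) with hH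
  have hmul : ∀ (lam : Kˣ) (z : ℂˣ), ∀ u ∈ U, i lam * j z * u ∈ H := fun lam z u hu =>
    H.mul_mem (H.mul_mem (Subgroup.subset_closure (Or.inl (Or.inl ⟨lam, rfl⟩)))
      (Subgroup.subset_closure (Or.inl (Or.inr ⟨z, rfl⟩)))) (Subgroup.subset_closure (Or.inr hu))
  have hle : H ≤ ((i.coprod j).coprod U.subtype).range := by
    rw [hH, Subgroup.closure_le]
    rintro g ((⟨lam, rfl⟩ | ⟨z, rfl⟩) | hu)
    · exact ⟨((lam, 1), 1), by simp⟩
    · exact ⟨((1, z), 1), by simp⟩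
    · exact ⟨((1, 1), ⟨g, hu⟩), by simp⟩
  have hinv : ∀ s, ∀ h ∈ H, ((χ (h * s) : ℂˣ) : ℂ)⁻¹ * f (h * s) = ((χ s : ℂˣ) : ℂ)⁻¹ * f s := by
    intro s h hh
    obtain ⟨⟨⟨lam, z⟩, u⟩, rfl⟩ := hle hh
    have h1 := hf s lam z u u.2
    have h3 := hχ.1 s lam z u u.2
    simp only [MonoidHom.coprod_apply, Subgroup.coe_subtype]
    simp only at h3
    rw [h1, h3, ← coe_weightHom]
    have := (weightHom w₁ w₂ z).ne_zero
    field_simp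
  let p : Additive (G ⧸ H) → ℂ := fun q => Quotient.liftOn' q.toMul
    (fun s => ((χ s : ℂˣ) : ℂ)⁻¹ * f s) (by
      intro a b hab
      rw [QuotientGroup.leftRel_apply] at hab
      have := hinv a _ hab
      rw [mul_comm a⁻¹ b, inv_mul_cancel_right] at this
      exact this.symm)
  let L : (Additive (G ⧸ H) → ℂ) →ₗ[ℂ] (G → ℂ) :=
    { toFun := fun q s => (χ s : ℂ) * q (Additive.ofMul (QuotientGroup.mk s))
      map_add' := fun a b => by ext s; simp [mul_add]
      map_smul' := fun a b => by ext s; simp [mul_left_comm] }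
  have hLp : L p = f := by
    ext s
    change (χ s : ℂ) * (((χ s : ℂˣ) : ℂ)⁻¹ * f s) = f s
    exact mul_inv_cancel_left₀ (χ s).ne_zero _
  have hp : p ∈ Submodule.span ℂ (Set.range (AddChar.complexBasis (Additive (G ⧸ H)))) := by
    rw [Module.Basis.span_eq]; trivial
  rw [← hLp]
  have h5 := Submodule.mem_map_of_mem (f := L) hp
  rw [Submodule.map_span] at h5
  refine Submodule.span_mono ?_ h5
  rintro _ ⟨_, ⟨ψ, rfl⟩, rfl⟩
  rw [AddChar.complexBasis_apply]
  refine ⟨fun s lam z u hu => ?_, ?_, fun a b => ?_⟩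
  · have h3 := hχ.1 s lam z u hu
    have h4 : (QuotientGroup.mk (i lam * j z * u * s) : G ⧸ H) = QuotientGroup.mk s := by
      rw [QuotientGroup.mk_mul, (QuotientGroup.eq_one_iff _).2 (hmul lam z u hu), one_mul]
    change (χ (i lam * j z * u * s) : ℂ) * ψ (Additive.ofMul (QuotientGroup.mk _)) =
      _ * ((χ s : ℂ) * ψ (Additive.ofMul (QuotientGroup.mk s)))
    simp only at h3
    rw [h3, h4, mul_assoc]
  · change (χ 1 : ℂ) * ψ (Additive.ofMul (QuotientGroup.mk 1)) = 1
    rw [QuotientGroup.mk_one, ofMul_one, AddChar.map_zero_eq_one]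
    simp
  · change (χ (a * b) : ℂ) * ψ (Additive.ofMul (QuotientGroup.mk (a * b))) =
      ((χ a : ℂ) * ψ (Additive.ofMul (QuotientGroup.mk a))) *
        ((χ b : ℂ) * ψ (Additive.ofMul (QuotientGroup.mk b)))
    rw [QuotientGroup.mk_mul, ofMul_mul, AddChar.map_add_eq_mul, map_mul, Units.val_mul]
    ring

/-- Elements of `Ξ_w` are monoid homomorphisms `G → ℂ`, so Dedekind's theorem applies. -/
lemma linearIndependent_xi :
    LinearIndependent ℂ (fun ξ : XiSet G i j U w₁ w₂ => (ξ : G → ℂ)) :=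
  (linearIndependent_monoidHom G ℂ).comp
    (fun ξ : XiSet G i j U w₁ w₂ =>
      ({ toFun := ξ, map_one' := ξ.2.2.1, map_mul' := ξ.2.2.2 } : G →* ℂ))
    (fun _ _ hab => Subtype.ext (congrArg (fun g : G →* ℂ => (g : G → ℂ)) hab))

end

/-- Existence and basis property of Hecke characters of weight `w` and level
`O_{K,c}` for an imaginary quadratic field `K`:  `Ξ_w(O_{K,c})` is nonempty iff
`(O_K^×)^w = 1` when `c = 1`, and iff `|w| = w₁ + w₂` is even when `c ≥ 2`;
and when nonempty it is a basis of `S_w(O_{K,c})`.  The idèle class group is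
modelled by a commutative group `G` with maps `i : K^× → G`, `j : ℂ^× → G`, a
subgroup `U = Ô_{K,c}^×` such that `ℂ^× ∩ K^×U` is the unit group of `O_{K,c}`
(hypothesis `hH`), and with finite class group `G/(K^× ℂ^× U)`. -/
theorem hecke_characters_exist_and_form_basis
    {K : Type*} [Field K] [NumberField K]
    (h2 : Module.finrank ℚ K = 2)
    (him : ∀ v : NumberField.InfinitePlace K, v.IsComplex)
    (σ : K →+* ℂ)
    (G : Type*) [CommGroup G]
    (i : Kˣ →* G) (j : ℂˣ →* G) (U : Subgroup G)
    (c : ℕ) (hc : 0 < c)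
    (hH : ∀ z : ℂˣ,
      (∃ lam : Kˣ, ∃ u ∈ U, j z = i lam * u) ↔
        ∃ v : (𝓞 K)ˣ, (∃ (n : ℤ) (y : 𝓞 K), (v : 𝓞 K) = (n : 𝓞 K) + (c : 𝓞 K) * y) ∧
          σ ((v : 𝓞 K) : K) = (z : ℂ))
    (hfin : Finite (G ⧸ Subgroup.closure (Set.range i ∪ Set.range j ∪ (U : Set G))))
    (w₁ w₂ : ℤ) :
    ((c = 1 → ((∃ f : G → ℂ, f ∈ XiSet G i j U w₁ w₂) ↔
        ∀ v : (𝓞 K)ˣ, σ ((v : 𝓞 K) : K) ^ w₁ * (starRingEnd ℂ) (σ ((v : 𝓞 K) : K)) ^ w₂ = 1)) ∧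
      (2 ≤ c → ((∃ f : G → ℂ, f ∈ XiSet G i j U w₁ w₂) ↔ Even (w₁ + w₂)))) ∧
    ((∀ f ∈ SwSet G i j U w₁ w₂, f ∈ Submodule.span ℂ (XiSet G i j U w₁ w₂)) ∧
      LinearIndependent ℂ (fun ξ : XiSet G i j U w₁ w₂ => (ξ : G → ℂ))) := by
  have hchar : (∃ f : G → ℂ, f ∈ XiSet G i j U w₁ w₂) ↔
      ∀ z : ℂˣ, (∃ lam : Kˣ, ∃ u ∈ U, j z = i lam * u) → weightHom w₁ w₂ z = 1 := by
    constructor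
    · rintro ⟨f, hf, hf1, -⟩ z hz
      exact weightHom_eq_one_of_mem hf (s := 1) (by rw [hf1]; exact one_ne_zero) hz
    · intro h
      obtain ⟨χ, hχ⟩ := exists_hecke_of_trivial h
      exact ⟨_, hχ⟩
  have hunit : (∃ f : G → ℂ, f ∈ XiSet G i j U w₁ w₂) ↔
      ∀ v : (𝓞 K)ˣ, (∃ (n : ℤ) (y : 𝓞 K), (v : 𝓞 K) = (n : 𝓞 K) + (c : 𝓞 K) * y) →
        σ ((v : 𝓞 K) : K) ^ w₁ * (starRingEnd ℂ) (σ ((v : 𝓞 K) : K)) ^ w₂ = 1 := by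
    rw [hchar]
    constructor
    · intro h v hv
      have hv0 : σ ((v : 𝓞 K) : K) ≠ 0 := by simp
      have h1 := h (Units.mk0 _ hv0) ((hH _).2 ⟨v, hv, rfl⟩)
      have h3 := coe_weightHom w₁ w₂ (Units.mk0 _ hv0)
      rw [h1] at h3
      exact h3.symm
    · intro h z hz
      obtain ⟨v, hv, hvz⟩ := (hH z).1 hz
      have h1 := h v hv
      rw [hvz, ← coe_weightHom] at h1
      exact Units.ext h1
  refine ⟨⟨?_, ?_⟩, ?_, linearIndependent_xi⟩
  · rintro rfl
    rw [hunit]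
    exact ⟨fun h v => h v ⟨0, v, by simp⟩, fun h v _ => h v⟩
  · intro hc2
    have hneg : (-1 : ℂ) ^ w₁ * (-1 : ℂ) ^ w₂ = (-1) ^ (w₁ + w₂) :=
      (zpow_add₀ (by norm_num) _ _).symm
    rw [hunit]
    constructor
    · intro h
      have h1 := h (-1) ⟨-1, 0, by simp⟩
      by_contra hodd
      rw [Int.not_even_iff_odd] at hodd
      have h3 : (-1 : ℂ) ^ (w₁ + w₂) = 1 := by
        rw [← hneg]; simpa using h1
      rw [hodd.neg_one_zpow] at h3
      norm_num at h3
    · rintro heven v ⟨n, y, hv⟩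
      rcases unit_of_order_eq_one_or_neg_one h2 him σ c hc2 v n y hv with h | h
      · simp [h]
      · rw [h, map_neg, map_one, hneg, heven.neg_one_zpow]
  · intro f hf
    by_cases hf0 : f = 0
    · rw [hf0]; exact Submodule.zero_mem _
    obtain ⟨s, hs⟩ := Function.ne_iff.1 hf0
    obtain ⟨χ, hχ⟩ := exists_hecke_of_trivial
      (fun z hz => weightHom_eq_one_of_mem hf hs hz)
    exact mem_span_of_hecke hfin hχ hf
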